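/- arXiv:2408.01992 — 2 statements merged into one kernel-verified Lean document; each statement's English description precedes it below -/
import Mathlib

section
/- Let (M, ρ) be a nonempty compact metric space and f : M → M a homeomorphism. If the chain recurrent set R_f of f is finite, then every point of R_f is a periodic point of f: for each x ∈ R_f there exists an integer m ≥ 1 with f^m(x) = x. -/
open Filter Topology

/-- An `ε`-chain of the map `f` from `x` to `y`: a finite sequence of points
`x = x₀, x₁, …, x_k = y` together with integers `m₁, …, m_k ≥ 1` such that
`dist (f^{m_i}(x_{i-1}), x_i) < ε` for every `1 ≤ i ≤ k`. -/
def IsEpsChain {M : Type*} [PseudoMetricSpace M] (f : M → M) (ε : ℝ) (x y : M) : Prop :=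
  ∃ k : ℕ, 0 < k ∧ ∃ (c : Fin (k + 1) → M) (m : Fin k → ℕ),
    c 0 = x ∧ c (Fin.last k) = y ∧ (∀ i, 1 ≤ m i) ∧
    ∀ i : Fin k, dist (f^[m i] (c i.castSucc)) (c i.succ) < ε

/-- A point is chain recurrent for `f` if for every `ε > 0` there is an `ε`-chain
from the point to itself. -/
def ChainRecurrent {M : Type*} [PseudoMetricSpace M] (f : M → M) (x : M) : Prop :=
  ∀ ε : ℝ, 0 < ε → IsEpsChain f ε x x

/-- The chain recurrent set of `f`. -/
def chainRecurrentSet {M : Type*} [PseudoMetricSpace M] (f : M → M) : Set M :=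
  {x | ChainRecurrent f x}

/-- for a homeomorphism `f` of a nonempty compact metric space,
if the chain recurrent set `R_f` is finite, then every point of `R_f` is periodic:
there is an integer `m ≥ 1` with `f^m(x) = x`. -/
theorem chainRecurrentSet_finite_periodic {M : Type*} [MetricSpace M] [CompactSpace M]
    [Nonempty M] (f : M ≃ₜ M) (hfin : (chainRecurrentSet (⇑f)).Finite) :
    ∀ x ∈ chainRecurrentSet (⇑f), ∃ m : ℕ, 1 ≤ m ∧ (⇑f)^[m] x = x := by
  have hinv : ∀ x ∈ chainRecurrentSet (⇑f), f x ∈ chainRecurrentSet (⇑f) := by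
    intro x hx ε hε
    obtain ⟨δ, hδ, hu⟩ := Metric.uniformContinuous_iff.1
      (CompactSpace.uniformContinuous_of_continuous f.continuous) ε hε
    obtain ⟨k, hk, c, m, h0, h1, hm, hd⟩ := hx δ hδ
    refine ⟨k, hk, fun i => f (c i), m, by simp [h0], by simp [h1], hm, fun i => ?_⟩
    show dist ((⇑f)^[m i] (f (c i.castSucc))) (f (c i.succ)) < ε
    rw [← Function.iterate_succ_apply, Function.iterate_succ_apply']
    exact hu (hd i)
  intro x hx
  have hit : ∀ n : ℕ, (⇑f)^[n] x ∈ chainRecurrentSet (⇑f) := by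
    intro n
    induction n with
    | zero => exact hx
    | succ n ih =>
      rw [Function.iterate_succ_apply']
      exact hinv _ ih
  obtain ⟨i, j, hij, he⟩ := hfin.exists_lt_map_eq_of_forall_mem hit
  refine ⟨j - i, by omega, ?_⟩
  apply f.injective.iterate i
  rw [← Function.iterate_add_apply, Nat.add_sub_cancel' hij.le]
  exact he.symm
end

section
/- Let M be a closed topological n-manifold, B ⊆ M a compact locally flat n-ball with frontier sphere S = ∂B, and φ : S^{n−1} → S a homeomorphism from the standard unit sphere S^{n−1} = ∂𝔹ⁿ ⊆ ℝⁿ onto S. Then the quotient space of the disjoint union (M ∖ int B) ⊔ 𝔹ⁿ obtained by identifying each x ∈ ∂𝔹ⁿ with φ(x) ∈ M ∖ int B (with the quotient topology) is homeomorphic to M. -/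
open Filter Topology

/-- `M` is a topological `n`-manifold without boundary: every point has an open
neighbourhood homeomorphic to `ℝⁿ`. -/
def IsChartedEuclidean (n : ℕ) (M : Type*) [TopologicalSpace M] : Prop :=
  ∀ x : M, ∃ U : Set M, IsOpen U ∧ x ∈ U ∧ Nonempty (U ≃ₜ EuclideanSpace ℝ (Fin n))

/-- The half space `ℝⁿ₊ = {x ∈ ℝⁿ : xₙ ≥ 0}` (last coordinate nonnegative). -/
def halfSpace (n : ℕ) : Set (EuclideanSpace ℝ (Fin n)) :=
  {y | ∀ j : Fin n, (j : ℕ) = n - 1 → 0 ≤ y j}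

/-- A subset `X ⊆ M` is a locally flat codimension-zero submanifold: every `x ∈ X`
has an open neighbourhood `U` in `M` and a homeomorphism `ψ : U ≃ₜ ℝⁿ` with either
`ψ(U ∩ X) = ℝⁿ` or `ψ(U ∩ X) = ℝⁿ₊`. -/
def IsLocallyFlatCodimZero (n : ℕ) {M : Type*} [TopologicalSpace M] (X : Set M) : Prop :=
  ∀ x ∈ X, ∃ U : Set M, IsOpen U ∧ x ∈ U ∧
    ∃ ψ : U ≃ₜ EuclideanSpace ℝ (Fin n),
      ψ '' {y : U | (y : M) ∈ X} = Set.univ ∨ ψ '' {y : U | (y : M) ∈ X} = halfSpace n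

/-- A compact locally flat `n`-ball in `M`: a compact subset homeomorphic to the closed
unit ball of `ℝⁿ` which is locally flat (of codimension zero) in `M`. -/
def IsCompactLocallyFlatBall (n : ℕ) {M : Type*} [TopologicalSpace M] (B : Set M) : Prop :=
  IsCompact B ∧ Nonempty (B ≃ₜ (Metric.closedBall (0 : EuclideanSpace ℝ (Fin n)) 1)) ∧
    IsLocallyFlatCodimZero n B


theorem det_pos_of_small {n : ℕ} (A : EuclideanSpace ℝ (Fin n) →L[ℝ] EuclideanSpace ℝ (Fin n))
    (t : ℝ) (ht : 0 ≤ t) (h : t * ‖A‖ < 1) :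
    0 < (ContinuousLinearMap.id ℝ (EuclideanSpace ℝ (Fin n)) + t • A).det := by
  have hne : ∀ s ∈ Set.Icc 0 t,
      (ContinuousLinearMap.id ℝ (EuclideanSpace ℝ (Fin n)) + s • A).det ≠ 0 := by
    intro s hs h0
    have hk : (LinearMap.ker ((ContinuousLinearMap.id ℝ (EuclideanSpace ℝ (Fin n)) + s • A :
        EuclideanSpace ℝ (Fin n) →L[ℝ] EuclideanSpace ℝ (Fin n)) :
        EuclideanSpace ℝ (Fin n) →ₗ[ℝ] EuclideanSpace ℝ (Fin n))) = ⊥ := by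
      rw [LinearMap.ker_eq_bot']
      intro v hv
      have hv' : v + s • A v = 0 := by simpa using hv
      have h1 : ‖v‖ = s * ‖A v‖ := by
        rw [eq_neg_of_add_eq_zero_left hv', norm_neg, norm_smul, Real.norm_of_nonneg hs.1]
        congr 2
        rw [← eq_neg_of_add_eq_zero_left hv']
      have h2 := A.le_opNorm v
      by_contra hv0
      have h3 : 0 < ‖v‖ := norm_pos_iff.2 hv0
      have h4 : s * ‖A‖ ≤ t * ‖A‖ := by gcongr; exact hs.2
      have h5 : s * ‖A v‖ ≤ s * (‖A‖ * ‖v‖) := by gcongr; exact hs.1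
      nlinarith
    have := LinearMap.isUnit_det _ ((LinearMap.isUnit_iff_ker_eq_bot _).2 hk)
    exact this.ne_zero h0
  by_contra hneg
  push Not at hneg
  have hc : ContinuousOn (fun s : ℝ =>
      (ContinuousLinearMap.id ℝ (EuclideanSpace ℝ (Fin n)) + s • A).det) (Set.Icc 0 t) := by
    apply Continuous.continuousOn
    exact ContinuousLinearMap.continuous_det.comp (by fun_prop)
  have h0 : (ContinuousLinearMap.id ℝ (EuclideanSpace ℝ (Fin n)) + (0:ℝ) • A).det = 1 := by
    simp [ContinuousLinearMap.det]
  obtain ⟨s, hs, hs0⟩ := intermediate_value_Icc' ht hc ⟨hneg, by simp [h0]⟩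
  exact hne s hs hs0

theorem det_interp {n : ℕ} (v : ℕ → ℝ) (hv : Function.Injective v) :
    ∃ c : ℕ → ℝ, ∑ i ∈ Finset.range (n+1), c i = 1 ∧
      ∀ A : EuclideanSpace ℝ (Fin n) →L[ℝ] EuclideanSpace ℝ (Fin n),
        (ContinuousLinearMap.id ℝ (EuclideanSpace ℝ (Fin n)) + A).det =
          ∑ i ∈ Finset.range (n+1), c i *
            (ContinuousLinearMap.id ℝ (EuclideanSpace ℝ (Fin n)) + v i • A).det := by
  refine ⟨fun i => (Lagrange.basis (Finset.range (n+1)) v i).eval 1, ?_, ?_⟩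
  · rw [← Polynomial.eval_finsetSum, Lagrange.sum_basis hv.injOn (by simp), Polynomial.eval_one]
  · intro A
    let b := (EuclideanSpace.basisFun (Fin n) ℝ).toBasis
    let m : Matrix (Fin n) (Fin n) ℝ := LinearMap.toMatrix b b A
    let p : Polynomial ℝ := Matrix.det ((Polynomial.X : Polynomial ℝ) • m.map Polynomial.C +
      (1 : Matrix (Fin n) (Fin n) ℝ).map Polynomial.C)
    have hp : ∀ t : ℝ, (ContinuousLinearMap.id ℝ (EuclideanSpace ℝ (Fin n)) + t • A).det
        = p.eval t := by
      intro t
      have : p.eval t = (t • m + 1).det := by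
        simp only [p]
        rw [← Polynomial.coe_evalRingHom, RingHom.map_det]
        congr 1
        ext i j
        simp [Matrix.one_apply]
        split_ifs <;> simp [mul_comm]
      rw [this, ContinuousLinearMap.det, ← LinearMap.det_toMatrix b]
      congr 1
      simp [m, add_comm]
    have hd : p.degree < (Finset.range (n+1)).card := by
      have := Polynomial.natDegree_det_X_add_C_le m 1
      rw [Finset.card_range]
      refine lt_of_le_of_lt Polynomial.degree_le_natDegree ?_
      norm_cast
      rw [Fintype.card_fin] at this
      change p.natDegree ≤ n at this
      omega
    have h1 := hp 1
    rw [one_smul] at h1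
    rw [h1]
    conv_lhs => rw [Lagrange.eq_interpolate hv.injOn hd]
    simp only [Lagrange.interpolate_apply, Polynomial.eval_finsetSum, Polynomial.eval_mul,
      Polynomial.eval_C, hp]
    exact Finset.sum_congr rfl fun i _ => mul_comm _ _

abbrev EE (n : ℕ) := EuclideanSpace ℝ (Fin n)

theorem bij_of_lip {E : Type*} [NormedAddCommGroup E] [NormedSpace ℝ E] [CompleteSpace E]
    (w : E → E) (c : NNReal) (hc : c < 1) (hw : LipschitzWith c w) :
    Function.Bijective (fun x => x + w x) := by
  have ha : ApproximatesLinearOn (fun x => x + w x)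
      ((ContinuousLinearEquiv.refl ℝ E : E ≃L[ℝ] E) : E →L[ℝ] E) Set.univ c := by
    intro x _ y _
    have := hw.norm_sub_le x y
    have h2 : x + w x - (y + w y) - (x - y) = w x - w y := by abel
    rw [← h2] at this
    exact this
  have hc' : Subsingleton E ∨
      c < ‖((ContinuousLinearEquiv.refl ℝ E).symm : E →L[ℝ] E)‖₊⁻¹ := by
    rcases subsingleton_or_nontrivial E with h | h
    · exact Or.inl h
    · right
      have : ‖((ContinuousLinearEquiv.refl ℝ E).symm : E →L[ℝ] E)‖₊ = 1 := by
        ext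
        exact ContinuousLinearMap.norm_id
      rw [this]; simpa using hc
  exact ⟨Set.injOn_univ.1 (ha.injOn hc'), ha.surjective hc'⟩

theorem lip_cutoff {E : Type*} [NormedAddCommGroup E] [NormedSpace ℝ E]
    (u : E → E) (C : NNReal) (ρ : ℝ) (hu : LipschitzOnWith C u (Metric.closedBall 0 ρ))
    (h0 : ∀ x, ‖x‖ = ρ → u x = 0) :
    LipschitzWith C ((Metric.closedBall (0:E) ρ).indicator u) := by
  have key : ∀ x y : E, ‖x‖ ≤ ρ → ρ < ‖y‖ → ‖u x‖ ≤ C * ‖x - y‖ := by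
    intro x y hx hy
    have hc : ContinuousOn (fun s : ℝ => ‖x + s • (y - x)‖) (Set.Icc 0 1) := by fun_prop
    obtain ⟨s, hs, hs1⟩ := intermediate_value_Icc zero_le_one hc
      (show ρ ∈ Set.Icc _ _ from ⟨by simpa using hx, by simpa using hy.le⟩)
    have h1 := hu.norm_sub_le (x := x) (by simpa using hx) (y := x + s • (y - x))
      (by simpa using hs1.le)
    rw [h0 _ hs1, sub_zero] at h1
    refine h1.trans ?_
    gcongr
    rw [sub_add_cancel_left, norm_neg, norm_smul, Real.norm_of_nonneg hs.1, norm_sub_rev]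
    exact mul_le_of_le_one_left (norm_nonneg _) hs.2
  refine LipschitzWith.of_dist_le_mul fun x y => ?_
  rw [dist_eq_norm, dist_eq_norm]
  by_cases hx : ‖x‖ ≤ ρ <;> by_cases hy : ‖y‖ ≤ ρ
  · rw [Set.indicator_of_mem (by simpa using hx), Set.indicator_of_mem (by simpa using hy)]
    exact hu.norm_sub_le (by simpa using hx) (by simpa using hy)
  · rw [Set.indicator_of_mem (by simpa using hx), Set.indicator_of_notMem (by simpa using hy)]
    simpa using key x y hx (not_le.1 hy)
  · rw [Set.indicator_of_mem (a := y) (by simpa using hy),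
      Set.indicator_of_notMem (a := x) (by simpa using hx)]
    rw [zero_sub, norm_neg, norm_sub_rev]
    exact key y x hy (not_le.1 hx)
  · rw [Set.indicator_of_notMem (a := y) (by simpa using hy),
      Set.indicator_of_notMem (a := x) (by simpa using hx)]
    simp
    positivity

open MeasureTheory in
theorem no_smooth_retr {n : ℕ} (ρ : ℝ) (hρ : 0 < ρ)
    (r : EE n → EE n) (hr : ContDiff ℝ 1 r)
    (hn : ∀ x, ‖r x‖ = ρ) (hid : ∀ x, ‖x‖ = ρ → r x = x) : False := by
  let u : (EE n) → (EE n) := fun x => r x - x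
  have hu : ContDiff ℝ 1 u := hr.sub contDiff_id
  have hdu : Continuous (fderiv ℝ u) := hu.continuous_fderiv one_ne_zero
  have hud : Differentiable ℝ u := hu.differentiable one_ne_zero
  have hu0 : ∀ x, ‖x‖ = ρ → u x = 0 := fun x hx => by simp [u, hid x hx]
  obtain ⟨C, hC⟩ := (isCompact_closedBall (0:(EE n)) ρ).exists_bound_of_continuousOn hdu.continuousOn
  have hC0 : 0 ≤ C := (norm_nonneg _).trans (hC 0 (by simp [hρ.le]))
  lift C to NNReal using hC0
  have hlip : LipschitzOnWith C u (Metric.closedBall 0 ρ) :=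
    (convex_closedBall (0:(EE n)) ρ).lipschitzOnWith_of_nnnorm_fderiv_le (𝕜 := ℝ)
      (fun x _ => hud x) (fun x hx => hC x hx)
  have hw := lip_cutoff u C ρ hlip hu0
  set w := (Metric.closedBall (0:(EE n)) ρ).indicator u with hwdef
  let v : ℕ → ℝ := fun i => ((C:ℝ) + 1)⁻¹ * ((i:ℝ)+1)⁻¹
  have hCpos : (0:ℝ) < (C:ℝ) + 1 := by positivity
  have hv : Function.Injective v := by
    intro i j hij
    have := mul_left_cancel₀ (inv_ne_zero hCpos.ne') hij
    have := inv_injective this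
    exact_mod_cast add_right_cancel this
  have hv0 : ∀ i, 0 ≤ v i := fun i => by positivity
  have hv1 : ∀ i, v i * C < 1 := by
    intro i
    have h1 : ((i:ℝ)+1)⁻¹ ≤ 1 := inv_le_one_of_one_le₀ (by simp)
    have h2 : v i ≤ ((C:ℝ) + 1)⁻¹ := mul_le_of_le_one_right (by positivity) h1
    have h3 : v i * C ≤ ((C:ℝ) + 1)⁻¹ * C := by gcongr
    have h4 : ((C:ℝ) + 1)⁻¹ * C < 1 := by
      rw [inv_mul_lt_iff₀ hCpos]; simp
    linarith
  -- the volume identity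
  have hvol : ∀ i, ∫ x in Metric.ball (0:(EE n)) ρ,
      (ContinuousLinearMap.id ℝ (EE n) + v i • fderiv ℝ u x).det = volume.real (Metric.ball (0:(EE n)) ρ) := by
    intro i
    have hbij : Function.Bijective (fun x => x + v i • w x) := by
      refine bij_of_lip (fun x => v i • w x) (⟨v i, hv0 i⟩ * C) ?_ ?_
      · exact_mod_cast hv1 i
      · refine LipschitzWith.of_dist_le_mul fun x y => ?_
        have := hw.dist_le_mul x y
        rw [dist_smul₀, Real.norm_of_nonneg (hv0 i)]
        refine le_of_le_of_eq ?_ (mul_assoc (v i) (C:ℝ) (dist x y)).symm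
        exact mul_le_mul_of_nonneg_left this (hv0 i)
    have hout : ∀ x, x ∉ Metric.ball (0:(EE n)) ρ → x + v i • w x = x := by
      intro x hx
      have : w x = 0 := by
        by_cases h : x ∈ Metric.closedBall (0:(EE n)) ρ
        · rw [hwdef, Set.indicator_of_mem h]
          apply hu0
          simp at h hx
          linarith
        · rw [hwdef, Set.indicator_of_notMem h]
      simp [this]
    have hin : ∀ x, x ∈ Metric.ball (0:(EE n)) ρ → x + v i • w x = x + v i • u x := by
      intro x hx
      rw [hwdef, Set.indicator_of_mem (Metric.ball_subset_closedBall hx)]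
    have himg : (fun x => x + v i • u x) '' Metric.ball (0:(EE n)) ρ = Metric.ball (0:(EE n)) ρ := by
      ext y
      constructor
      · rintro ⟨x, hx, rfl⟩
        by_contra hy
        have h1 := hout _ hy
        simp only at h1
        have h2 := hbij.1 (h1.trans (hin x hx).symm)
        rw [← h2] at hx
        exact hy hx
      · intro hy
        obtain ⟨x, hx⟩ := hbij.2 y
        by_cases hxb : x ∈ Metric.ball (0:(EE n)) ρ
        · exact ⟨x, hxb, by rw [← hx]; exact (hin x hxb).symm⟩
        · have := hout x hxb
          simp only at hx
          rw [hx] at this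
          exact absurd (this ▸ hy) hxb
    have hinj : Set.InjOn (fun x => x + v i • u x) (Metric.ball (0:(EE n)) ρ) := by
      intro x hx y hy hxy
      apply hbij.1
      simp only at hxy ⊢
      rw [hin x hx, hin y hy, hxy]
    have hder : ∀ x ∈ Metric.ball (0:(EE n)) ρ, HasFDerivWithinAt (fun x => x + v i • u x)
        (ContinuousLinearMap.id ℝ (EE n) + v i • fderiv ℝ u x) (Metric.ball (0:(EE n)) ρ) x := by
      intro x _
      exact ((hasFDerivAt_id x).add ((hud x).hasFDerivAt.const_smul (v i))).hasFDerivWithinAt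
    have := integral_image_eq_integral_abs_det_fderiv_smul volume measurableSet_ball hder hinj
      (fun _ => (1:ℝ))
    rw [himg] at this
    simp only [integral_const, smul_eq_mul, mul_one, measureReal_restrict_apply_univ] at this
    rw [this]
    refine setIntegral_congr_fun measurableSet_ball fun x hx => ?_
    rw [abs_of_pos]
    apply det_pos_of_small _ _ (hv0 i)
    refine lt_of_le_of_lt ?_ (hv1 i)
    have := hC x (Metric.ball_subset_closedBall hx)
    have h3 := hv0 i
    gcongr
  obtain ⟨c, hc1, hc⟩ := det_interp (n := n) v hv
  have hint : ∀ i, IntegrableOn (fun x =>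
      c i * (ContinuousLinearMap.id ℝ (EE n) + v i • fderiv ℝ u x).det) (Metric.ball (0:(EE n)) ρ) := by
    intro i
    refine IntegrableOn.mono_set ?_ Metric.ball_subset_closedBall
    refine ContinuousOn.integrableOn_compact (isCompact_closedBall _ _) (Continuous.continuousOn ?_)
    exact continuous_const.mul (ContinuousLinearMap.continuous_det.comp (by fun_prop))
  have hzero : ∀ x, (ContinuousLinearMap.id ℝ (EE n) + fderiv ℝ u x).det = 0 := by
    intro x
    have hrd : DifferentiableAt ℝ r x := hr.differentiable one_ne_zero x
    have h1 : ContinuousLinearMap.id ℝ (EE n) + fderiv ℝ u x = fderiv ℝ r x := by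
      have : fderiv ℝ u x = fderiv ℝ r x - ContinuousLinearMap.id ℝ (EE n) :=
        (hrd.hasFDerivAt.sub (hasFDerivAt_id x)).fderiv
      rw [this]; abel
    rw [h1]
    by_contra hdet
    have hsurj : Function.Surjective (fderiv ℝ r x) := by
      have hunit : IsUnit (LinearMap.det ((fderiv ℝ r x : (EE n) →L[ℝ] (EE n)) : (EE n) →ₗ[ℝ] (EE n))) :=
        isUnit_iff_ne_zero.2 hdet
      have := (LinearMap.isUnit_iff_isUnit_det _).2 hunit
      rw [LinearMap.isUnit_iff_range_eq_top] at this
      exact LinearMap.range_eq_top.1 this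
    obtain ⟨y, hy⟩ := hsurj (r x)
    have h2 : HasFDerivAt (fun z => inner ℝ (r z) (r z)) _ x :=
      hrd.hasFDerivAt.inner ℝ hrd.hasFDerivAt
    have h3 : (fun z => inner ℝ (r z) (r z)) = fun _ : (EE n) => ρ ^ 2 := by
      ext z
      rw [real_inner_self_eq_norm_sq, hn]
    rw [h3] at h2
    have h4 := h2.unique (hasFDerivAt_const _ _)
    have h5 := congrArg (fun L => L y) h4
    simp [hy, hn] at h5
    linarith
  have hfin : volume.real (Metric.ball (0:(EE n)) ρ) = 0 := by
    calc volume.real (Metric.ball (0:(EE n)) ρ)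
        = ∑ i ∈ Finset.range (n+1), c i * volume.real (Metric.ball (0:(EE n)) ρ) := by
          rw [← Finset.sum_mul, hc1, one_mul]
      _ = ∑ i ∈ Finset.range (n+1), ∫ x in Metric.ball (0:(EE n)) ρ,
            c i * (ContinuousLinearMap.id ℝ (EE n) + v i • fderiv ℝ u x).det := by
          refine Finset.sum_congr rfl fun i _ => ?_
          rw [integral_const_mul, hvol i]
      _ = ∫ x in Metric.ball (0:(EE n)) ρ, ∑ i ∈ Finset.range (n+1), 
            c i * (ContinuousLinearMap.id ℝ (EE n) + v i • fderiv ℝ u x).det := by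
          rw [integral_finsetSum _ fun i _ => hint i]
      _ = ∫ x in Metric.ball (0:(EE n)) ρ, (0:ℝ) := by
          congr 1
          ext x
          rw [← hc, hzero]
      _ = 0 := by simp
  have hpos : 0 < volume.real (Metric.ball (0:(EE n)) ρ) :=
    ENNReal.toReal_pos (Metric.measure_ball_pos volume 0 hρ).ne' measure_ball_lt_top.ne
  linarith

theorem no_cont_retr {n : ℕ} (ρ : ℝ) (hρ : 0 < ρ) (F : EE n → EE n)
    (hF : ContinuousOn F (Metric.closedBall 0 ρ)) (h0 : ∀ x, ‖x‖ ≤ ρ → F x ≠ 0)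
    (hid : ∀ x, ‖x‖ = ρ → F x = x) : False := by
  let π : EE n → EE n := fun x => (ρ / max ρ ‖x‖) • x
  have hmax : ∀ x : EE n, 0 < max ρ ‖x‖ := fun x => lt_of_lt_of_le hρ (le_max_left _ _)
  have hπc : Continuous π := by
    refine Continuous.smul (Continuous.div continuous_const (by fun_prop) fun x => (hmax x).ne')
      continuous_id
  have hπn : ∀ x, ‖π x‖ = ρ / max ρ ‖x‖ * ‖x‖ := fun x => by
    simp only [π]
    rw [norm_smul, Real.norm_of_nonneg (div_nonneg hρ.le (hmax x).le)]
  have hπ1 : ∀ x, ‖x‖ ≤ ρ → π x = x := fun x hx => by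
    simp only [π]
    rw [max_eq_left hx, div_self hρ.ne', one_smul]
  have hπ2 : ∀ x, ρ ≤ ‖x‖ → ‖π x‖ = ρ := fun x hx => by
    rw [hπn, max_eq_right hx, div_mul_cancel₀]
    linarith
  have hπ3 : ∀ x, ‖π x‖ ≤ ρ := fun x => by
    rcases le_total ‖x‖ ρ with h | h
    · rwa [hπ1 x h]
    · exact (hπ2 x h).le
  let f : EE n → EE n := fun x => F (π x) - π x
  have hf : Continuous f := by
    refine Continuous.sub ?_ hπc
    exact hF.comp_continuous hπc fun x => by simpa using hπ3 x
  have hfout : ∀ x, ρ ≤ ‖x‖ → f x = 0 := fun x hx => by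
    simp only [f]
    rw [hid _ (hπ2 x hx), sub_self]
  obtain ⟨z, hz, hmin⟩ := (isCompact_closedBall (0 : EE n) ρ).exists_isMinOn
    ⟨0, by simp [hρ.le]⟩ hF.norm
  have hm : 0 < ‖F z‖ := norm_pos_iff.2 (h0 z (by simpa using hz))
  obtain ⟨g, hg, hgf, hgs⟩ := hf.exists_contDiff_approx 1 (ε := fun _ => ‖F z‖)
    continuous_const (fun _ => hm)
  have hgout : ∀ x, ρ ≤ ‖x‖ → g x = 0 := fun x hx => by
    by_contra h
    exact hgs h (hfout x hx)
  have hG : ∀ x, x + g x ≠ 0 := by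
    intro x hx
    rcases le_total ‖x‖ ρ with h | h
    · have h1 := hgf x
      have h2 : ‖F z‖ ≤ ‖F x‖ := hmin (by simpa using h)
      simp only [f] at h1
      rw [hπ1 x h, dist_eq_norm] at h1
      have h3 : g x - (F x - x) = - F x := by
        rw [eq_neg_of_add_eq_zero_right hx]; abel
      rw [h3, norm_neg] at h1
      linarith
    · rw [hgout x h, add_zero] at hx
      rw [hx, norm_zero] at h
      linarith
  have hGc : ContDiff ℝ 1 (fun x => x + g x) := contDiff_id.add hg
  refine no_smooth_retr ρ hρ (fun x => (ρ / ‖x + g x‖) • (x + g x)) ?_ ?_ ?_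
  · exact (contDiff_const.div (hGc.norm ℝ hG) fun x => norm_ne_zero_iff.2 (hG x)).smul hGc
  · intro x
    have := norm_pos_iff.2 (hG x)
    rw [norm_smul, Real.norm_of_nonneg (by positivity), div_mul_cancel₀ _ this.ne']
  · intro x hx
    rw [hgout x hx.ge, add_zero, hx, div_self hρ.ne', one_smul]

open Classical in
/-- Invariance of boundary, convex version. -/
theorem no_corner {n : ℕ} {T : Type*} [TopologicalSpace T] (V K : Set (EE n)) (hV : IsOpen V)
    (hK : Convex ℝ K) (i : V → T) (hi : IsOpenEmbedding i) (j : K → T) (hj : IsOpenEmbedding j)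
    (v₀ : V) (k₀ : K) (hvk : i v₀ = j k₀) (l : EE n →ₗ[ℝ] ℝ) (hl : ∀ k ∈ K, l k ≤ l k₀)
    (p : EE n) (hp : p ∈ K) (hpl : l p < l k₀) : False := by
  have : Nonempty V := ⟨v₀⟩
  have : Nonempty K := ⟨k₀⟩
  let I := hi.toOpenPartialHomeomorph i
  let J := hj.toOpenPartialHomeomorph j
  have hIs : ∀ v, I.symm (i v) = v := fun v => I.left_inv (x := v) (by simp [I])
  have hJs : ∀ v, J.symm (j v) = v := fun v => J.left_inv (x := v) (by simp [J])
  -- `P (v, s)` : the pushed point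
  let Q : V → ℝ → EE n := fun v s => (1 - s) • (J.symm (i v) : EE n) + s • p
  have hQK : ∀ v s, 0 ≤ s → s ≤ 1 → Q v s ∈ K := fun v s h0 h1 =>
    hK (J.symm (i v)).2 hp (by linarith) h0 (by ring)
  -- the good sets
  let Vg : Set V := {v | i v ∈ Set.range j}
  have hVg : IsOpen Vg := hj.isOpen_range.preimage hi.continuous
  have hgc : ContinuousOn (fun v : V => (J.symm (i v) : EE n)) Vg := by
    refine continuous_subtype_val.comp_continuousOn ?_
    refine J.continuousOn_symm.comp hi.continuous.continuousOn ?_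
    intro v hv
    obtain ⟨k, hk⟩ := hv
    simp only [J, IsOpenEmbedding.toOpenPartialHomeomorph_target]
    exact ⟨k, hk⟩
  let Kg : Set K := {k | j k ∈ Set.range i}
  have hKg : IsOpen Kg := hi.isOpen_range.preimage hj.continuous
  have hfc : ContinuousOn (fun k : K => (I.symm (j k) : EE n)) Kg := by
    refine continuous_subtype_val.comp_continuousOn ?_
    refine I.continuousOn_symm.comp hj.continuous.continuousOn ?_
    intro v hv
    obtain ⟨k, hk⟩ := hv
    simp only [I, IsOpenEmbedding.toOpenPartialHomeomorph_target]
    exact ⟨k, hk⟩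
  obtain ⟨W, hW, hWK⟩ := isOpen_induced_iff.1 hKg
  have hv₀ : v₀ ∈ Vg := ⟨k₀, hvk.symm⟩
  have hk₀W : (k₀ : EE n) ∈ W := by
    have : k₀ ∈ Kg := ⟨v₀, hvk⟩
    rw [← hWK] at this
    exact this
  have hQ0 : Q v₀ 0 = k₀ := by simp [Q, hvk, hJs]
  have hgat : ContinuousAt (fun v : V => (J.symm (i v) : EE n)) v₀ :=
    hgc.continuousAt (hVg.mem_nhds hv₀)
  have hQat : ContinuousAt (fun q : V × ℝ => Q q.1 q.2) (v₀, 0) := by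
    have h1 : ContinuousAt (fun q : V × ℝ => (J.symm (i q.1) : EE n)) (v₀, 0) :=
      ContinuousAt.comp (f := Prod.fst) (x := (v₀, (0:ℝ))) hgat continuousAt_fst
    exact ((continuousAt_const.sub continuousAt_snd).smul h1).add
      (continuousAt_snd.smul continuousAt_const)
  have hev : ∀ᶠ q : V × ℝ in 𝓝 (v₀, 0), q.1 ∈ Vg ∧ Q q.1 q.2 ∈ W := by
    refine (continuousAt_fst.eventually (hVg.mem_nhds hv₀)).and (hQat.eventually ?_)
    simp only [hQ0]
    exact hW.mem_nhds hk₀W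
  obtain ⟨ε, hε, hball⟩ := Metric.eventually_nhds_iff.1 hev
  obtain ⟨δ, hδ, hδV⟩ := Metric.isOpen_iff.1 hV v₀ v₀.2
  obtain ⟨ρ, hρ, hρε, hρδ, hρ1⟩ : ∃ ρ : ℝ, 0 < ρ ∧ ρ < ε ∧ ρ < δ ∧ ρ ≤ 1 := by
    refine ⟨min (min ε δ) 1 / 2, by positivity, ?_, ?_, ?_⟩
    all_goals
      have h1 := min_le_left (min ε δ) 1
      have h2 := min_le_right (min ε δ) 1
      have h3 := min_le_left ε δ
      have h4 := min_le_right ε δ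
      have h5 : 0 < min (min ε δ) 1 := by positivity
      linarith
  have hmemV : ∀ y : EE n, ‖y‖ ≤ ρ → (v₀ : EE n) + y ∈ V := fun y hy =>
    hδV (by simpa using lt_of_le_of_lt hy hρδ)
  have hgood : ∀ (y : EE n) (hy : ‖y‖ ≤ ρ), (⟨v₀ + y, hmemV y hy⟩ : V) ∈ Vg ∧
      Q ⟨v₀ + y, hmemV y hy⟩ (ρ - ‖y‖) ∈ W := by
    intro y hy
    apply hball (y := (⟨v₀ + y, hmemV y hy⟩, ρ - ‖y‖))
    rw [Prod.dist_eq, max_lt_iff]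
    constructor
    · rw [Subtype.dist_eq]
      simpa using lt_of_le_of_lt hy hρε
    · simp only [Real.dist_eq, sub_zero]
      rw [abs_of_nonneg (by linarith)]
      have := norm_nonneg y
      linarith
  let D := Metric.closedBall (0 : EE n) ρ
  have hD : ∀ y : D, ‖(y : EE n)‖ ≤ ρ := fun y => mem_closedBall_zero_iff.1 y.2
  let c : D → V := fun y => ⟨v₀ + y, hmemV y (hD y)⟩
  have hc : Continuous c := by
    refine Continuous.subtype_mk (by fun_prop) _
  let P : D → K := fun y => ⟨Q (c y) (ρ - ‖(y : EE n)‖), hQK _ _ (by linarith [hD y])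
    (by linarith [norm_nonneg (y : EE n)])⟩
  have hP : Continuous P := by
    refine Continuous.subtype_mk ?_ _
    have h1 : Continuous (fun y : D => (J.symm (i (c y)) : EE n)) :=
      hgc.comp_continuous hc fun y => (hgood y (hD y)).1
    simp only [Q]
    fun_prop
  have hPK : ∀ y, P y ∈ Kg := fun y => by
    rw [← hWK]
    exact (hgood y (hD y)).2
  have hH : Continuous (fun y : D => (I.symm (j (P y)) : EE n) - v₀) :=
    (hfc.comp_continuous hP hPK).sub continuous_const
  have hJr : ∀ v ∈ Vg, j (J.symm (i v)) = i v := by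
    rintro v ⟨k, hk⟩
    rw [← hk, hJs]
  let F : EE n → EE n := fun y => if h : y ∈ D then (I.symm (j (P ⟨y, h⟩)) : EE n) - v₀ else 0
  refine no_cont_retr ρ hρ F ?_ ?_ ?_
  · rw [continuousOn_iff_continuous_domRestrict]
    convert hH using 1
    ext1 y
    simp only [Set.domRestrict_apply, F]
    rw [dif_pos y.2]
  · intro y hy hF0
    have hyD : y ∈ D := by simpa [D] using hy
    simp only [F] at hF0
    rw [dif_pos hyD, sub_eq_zero] at hF0
    have h1 : I.symm (j (P ⟨y, hyD⟩)) = v₀ := Subtype.ext hF0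
    obtain ⟨v, hv⟩ := hPK ⟨y, hyD⟩
    rw [← hv, hIs] at h1
    rw [h1, hvk] at hv
    have h2 := hj.injective hv
    have h3 : (k₀ : EE n) = Q (c ⟨y, hyD⟩) (ρ - ‖y‖) := congrArg Subtype.val h2
    have h4 : l k₀ = (1 - (ρ - ‖y‖)) * l (J.symm (i (c ⟨y, hyD⟩))) + (ρ - ‖y‖) * l p := by
      conv_lhs => rw [h3]
      simp [Q]
    have h5 := hl _ (J.symm (i (c ⟨y, hyD⟩))).2
    have hy0 := norm_nonneg y
    rcases hy.lt_or_eq with hlt | heq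
    · nlinarith
    · have h6 : k₀ = J.symm (i (c ⟨y, hyD⟩)) := by
        apply Subtype.ext
        rw [h3]
        simp [Q, heq]
      have h7 := hJr (c ⟨y, hyD⟩) (hgood y hy).1
      rw [← h6, ← hvk] at h7
      have h8 := congrArg Subtype.val (hi.injective h7)
      simp only [c] at h8
      have : y = 0 := by simpa using h8
      rw [this, norm_zero] at heq
      linarith
  · intro y hy
    have hyD : y ∈ D := by simp [D, hy]
    simp only [F]
    rw [dif_pos hyD]
    have h1 : P ⟨y, hyD⟩ = J.symm (i (c ⟨y, hyD⟩)) := by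
      apply Subtype.ext
      simp [P, Q, hy]
    rw [h1, hJr _ (hgood y hy.le).1, hIs]
    simp [c]

theorem sphere_of_frontier {n : ℕ} {M : Type*} [TopologicalSpace M]
    (B : Set M) (hfl : IsLocallyFlatCodimZero n B)
    (h : B ≃ₜ (Metric.closedBall (0 : EE n) 1)) (x : B) (hx : (x : M) ∈ frontier B) :
    ‖(h x : EE n)‖ = 1 := by
  have hle : ‖(h x : EE n)‖ ≤ 1 := mem_closedBall_zero_iff.1 (h x).2
  by_contra hne
  have hlt : ‖(h x : EE n)‖ < 1 := lt_of_le_of_ne hle hne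
  have hxi : (x : M) ∉ interior B := hx.2
  obtain ⟨U, hU, hxU, ψ, hψ⟩ := hfl x x.2
  have hnuniv : ψ '' {y : U | (y : M) ∈ B} ≠ Set.univ := by
    intro hu
    apply hxi
    refine mem_interior.2 ⟨U, ?_, hU, hxU⟩
    intro y hy
    have : ψ ⟨y, hy⟩ ∈ ψ '' {y : U | (y : M) ∈ B} := by rw [hu]; trivial
    obtain ⟨z, hz, hzy⟩ := this
    rw [ψ.injective hzy] at hz
    exact hz
  replace hψ := hψ.resolve_left hnuniv
  have hmem : ∀ y : U, (y : M) ∈ B ↔ ψ y ∈ halfSpace n := by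
    intro y
    rw [← hψ]
    constructor
    · intro hy
      exact ⟨y, hy, rfl⟩
    · rintro ⟨z, hz, hzy⟩
      rw [ψ.injective hzy] at hz
      exact hz
  rcases Nat.eq_zero_or_pos n with hn | hn
  · apply hnuniv
    rw [hψ]
    ext y
    simp only [halfSpace, Set.mem_ofPred_eq, Set.mem_univ, iff_true]
    intro j
    exact absurd j.2 (by omega)
  let j0 : Fin n := ⟨n - 1, by omega⟩
  have hhs : ∀ y : EE n, y ∈ halfSpace n ↔ 0 ≤ y j0 := by
    intro y
    constructor
    · intro hy; exact hy j0 rfl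
    · intro hy j hj
      have : j = j0 := Fin.ext hj
      rwa [this]
  let xU : U := ⟨x, hxU⟩
  have hk0 : ψ xU ∈ halfSpace n := (hmem xU).1 x.2
  have hle0 : ψ xU j0 ≤ 0 := by
    by_contra hpos
    push Not at hpos
    apply hxi
    refine mem_interior.2 ⟨Subtype.val '' {y : U | 0 < ψ y j0}, ?_, ?_, ⟨xU, hpos, rfl⟩⟩
    · rintro _ ⟨y, hy, rfl⟩
      exact (hmem y).2 ((hhs _).2 (le_of_lt hy))
    · apply hU.isOpenMap_subtype_val
      exact isOpen_lt continuous_const (by fun_prop)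
  have hkB : ∀ k : halfSpace n, (ψ.symm k : M) ∈ B := fun k => by
    rw [hmem, ψ.apply_symm_apply]
    exact k.2
  let i : Metric.ball (0 : EE n) 1 → B := fun v =>
    h.symm (Set.inclusion Metric.ball_subset_closedBall v)
  have hi : IsOpenEmbedding i := by
    refine h.symm.isOpenEmbedding.comp ⟨.inclusion Metric.ball_subset_closedBall, ?_⟩
    rw [Set.range_inclusion]
    exact Metric.isOpen_ball.preimage continuous_subtype_val
  let j : halfSpace n → B := fun k => ⟨ψ.symm k, hkB k⟩
  have hjc : Continuous j := Continuous.subtype_mk (by fun_prop) _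
  have hj : IsOpenEmbedding j := by
    refine ⟨.of_comp hjc continuous_subtype_val ?_, ?_⟩
    · have he : IsEmbedding (fun k : halfSpace n => (ψ.symm k : M)) :=
        IsEmbedding.comp (g := (Subtype.val : U → M)) IsEmbedding.subtypeVal
          (ψ.symm.isEmbedding.comp IsEmbedding.subtypeVal)
      exact he
    · have : Set.range j = Subtype.val ⁻¹' U := by
        ext b
        constructor
        · rintro ⟨k, rfl⟩
          exact (ψ.symm k).2
        · intro hb
          refine ⟨⟨ψ ⟨b, hb⟩, (hmem _).1 b.2⟩, ?_⟩
          apply Subtype.ext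
          simp [j]
      rw [this]
      exact hU.preimage continuous_subtype_val
  let l : EE n →ₗ[ℝ] ℝ := -(EuclideanSpace.proj j0 : EE n →L[ℝ] ℝ).toLinearMap
  have hl : ∀ y, l y = - y j0 := fun y => by simp [l]
  refine no_corner (Metric.ball (0 : EE n) 1) (halfSpace n) Metric.isOpen_ball ?_ i hi j hj
    ⟨h x, by simpa using hlt⟩ ⟨ψ xU, hk0⟩ ?_ l ?_ (EuclideanSpace.single j0 (1:ℝ)) ?_ ?_
  · intro a ha b hb s t hs ht _
    rw [hhs] at *
    simp only [PiLp.add_apply, PiLp.smul_apply, smul_eq_mul]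
    positivity
  · apply Subtype.ext
    simp [i, j, xU, Set.inclusion]
  · intro k hk
    rw [hl, hl]
    have := (hhs k).1 hk
    simp only
    linarith
  · rw [hhs]; simp
  · rw [hl, hl]
    simp
    linarith

theorem ball_of_interior {n : ℕ} {M : Type*} [TopologicalSpace M] (hM : IsChartedEuclidean n M)
    (B : Set M) (h : B ≃ₜ (Metric.closedBall (0 : EE n) 1)) (x : B) (hx : (x : M) ∈ interior B) :
    ‖(h x : EE n)‖ ≠ 1 := by
  intro h1
  obtain ⟨U, hU, hxU, ⟨ψ⟩⟩ := hM x
  let V : Set (EE n) := {v | (ψ.symm v : M) ∈ interior B}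
  have hV : IsOpen V := isOpen_interior.preimage (by fun_prop : Continuous fun v => (ψ.symm v : M))
  let i : V → B := fun v => ⟨ψ.symm v, interior_subset v.2⟩
  have hic : Continuous i := Continuous.subtype_mk (by fun_prop) _
  have hi : IsOpenEmbedding i := by
    refine ⟨.of_comp hic continuous_subtype_val ?_, ?_⟩
    · have he : IsEmbedding (fun k : V => (ψ.symm k : M)) :=
        IsEmbedding.comp (g := (Subtype.val : U → M)) IsEmbedding.subtypeVal
          (ψ.symm.isEmbedding.comp IsEmbedding.subtypeVal)
      exact he
    · have : Set.range i = Subtype.val ⁻¹' (U ∩ interior B) := by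
        ext b
        constructor
        · rintro ⟨k, rfl⟩
          exact ⟨(ψ.symm k).2, k.2⟩
        · intro hb
          refine ⟨⟨ψ ⟨b, hb.1⟩, ?_⟩, ?_⟩
          · simpa [V] using hb.2
          · apply Subtype.ext
            simp [i]
      rw [this]
      exact (hU.inter isOpen_interior).preimage continuous_subtype_val
  refine no_corner V (Metric.closedBall (0 : EE n) 1) hV (convex_closedBall _ _) i hi h.symm
    h.symm.isOpenEmbedding ⟨ψ ⟨x, hxU⟩, by simpa [V] using hx⟩ (h x) ?_
    (innerSL ℝ (h x : EE n)).toLinearMap ?_ 0 (by simp) ?_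
  · apply Subtype.ext
    simp [i]
  · intro k hk
    simp only [ContinuousLinearMap.coe_coe, innerSL_apply_apply, real_inner_self_eq_norm_sq, h1]
    have := real_inner_le_norm (h x : EE n) k
    have hk1 : ‖k‖ ≤ 1 := by simpa using hk
    rw [h1] at this
    linarith
  · simp only [ContinuousLinearMap.coe_coe, innerSL_apply_apply, real_inner_self_eq_norm_sq, h1]
    simp

/-- Alexander trick: radial extension. -/
theorem alexander {n : ℕ} (α : Metric.sphere (0 : EE n) 1 ≃ₜ Metric.sphere (0 : EE n) 1) :
    ∃ A : EE n → EE n, Continuous A ∧ (∀ x, ‖A x‖ = ‖x‖) ∧ Function.Bijective A ∧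
      ∀ x : Metric.sphere (0 : EE n) 1, A x = α x := by
  classical
  have hs : ∀ x : EE n, x ≠ 0 → ‖x‖⁻¹ • x ∈ Metric.sphere (0 : EE n) 1 := by
    intro x hx
    rw [mem_sphere_zero_iff_norm, norm_smul, norm_inv, norm_norm,
      inv_mul_cancel₀ (norm_ne_zero_iff.2 hx)]
  -- radial extension of any continuous map
  have main : ∀ β : Metric.sphere (0 : EE n) 1 ≃ₜ Metric.sphere (0 : EE n) 1,
      ∃ A : EE n → EE n, A 0 = 0 ∧ ∀ x (hx : x ≠ 0), A x = ‖x‖ • (β ⟨‖x‖⁻¹ • x, hs x hx⟩ : EE n) := by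
    intro β
    refine ⟨fun x => if hx : x = 0 then 0 else ‖x‖ • (β ⟨‖x‖⁻¹ • x, hs x hx⟩ : EE n), by simp, ?_⟩
    intro x hx
    simp [hx]
  have hβ : ∀ y : Metric.sphere (0 : EE n) 1, ‖(y : EE n)‖ = 1 := fun y =>
    mem_sphere_zero_iff_norm.1 y.2
  have hnorm : ∀ (β : Metric.sphere (0 : EE n) 1 ≃ₜ Metric.sphere (0 : EE n) 1) (A : EE n → EE n),
      A 0 = 0 → (∀ x (hx : x ≠ 0), A x = ‖x‖ • (β ⟨‖x‖⁻¹ • x, hs x hx⟩ : EE n)) →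
      ∀ x, ‖A x‖ = ‖x‖ := by
    intro β A h0 hA x
    by_cases hx : x = 0
    · rw [hx, h0]
    · rw [hA x hx, norm_smul, norm_norm, hβ, mul_one]
  have hinv : ∀ (β : Metric.sphere (0 : EE n) 1 ≃ₜ Metric.sphere (0 : EE n) 1) (A A' : EE n → EE n),
      A 0 = 0 → (∀ x (hx : x ≠ 0), A x = ‖x‖ • (β ⟨‖x‖⁻¹ • x, hs x hx⟩ : EE n)) →
      A' 0 = 0 → (∀ x (hx : x ≠ 0), A' x = ‖x‖ • (β.symm ⟨‖x‖⁻¹ • x, hs x hx⟩ : EE n)) →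
      ∀ x, A' (A x) = x := by
    intro β A A' h0 hA h0' hA' x
    by_cases hx : x = 0
    · rw [hx, h0, h0']
    · have hn := hnorm β A h0 hA x
      have hxn : ‖x‖ ≠ 0 := norm_ne_zero_iff.2 hx
      have hAx : A x ≠ 0 := by
        rw [← norm_ne_zero_iff, hn]; exact hxn
      rw [hA' _ hAx]
      have : (⟨‖A x‖⁻¹ • A x, hs _ hAx⟩ : Metric.sphere (0 : EE n) 1) =
          β ⟨‖x‖⁻¹ • x, hs x hx⟩ := by
        apply Subtype.ext
        simp only [hn]
        rw [hA x hx, smul_smul, inv_mul_cancel₀ hxn, one_smul]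
      rw [this, β.symm_apply_apply, hn]
      simp only
      rw [smul_smul, mul_inv_cancel₀ hxn, one_smul]
  obtain ⟨A, h0, hA⟩ := main α
  obtain ⟨A', h0', hA'⟩ := main α.symm
  have hn := hnorm α A h0 hA
  refine ⟨A, ?_, hn, ⟨?_, ?_⟩, ?_⟩
  · rw [continuous_iff_continuousAt]
    intro x
    by_cases hx : x = 0
    · rw [hx, ContinuousAt, h0, tendsto_zero_iff_norm_tendsto_zero]
      simp only [hn]
      simpa using (continuous_norm.tendsto (0 : EE n))
    · have hco : ContinuousOn A {0}ᶜ := by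
        rw [continuousOn_iff_continuous_domRestrict]
        have h1 : Continuous (fun y : ({0}ᶜ : Set (EE n)) => ‖(y : EE n)‖ •
            (α ⟨‖(y : EE n)‖⁻¹ • (y : EE n), hs y y.2⟩ : EE n)) := by
          have hnc : Continuous (fun y : ({0}ᶜ : Set (EE n)) => ‖(y : EE n)‖) :=
            continuous_norm.comp continuous_subtype_val
          have hic : Continuous (fun y : ({0}ᶜ : Set (EE n)) => ‖(y : EE n)‖⁻¹ • (y : EE n)) :=
            (hnc.inv₀ fun y => norm_ne_zero_iff.2 y.2).smul continuous_subtype_val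
          exact hnc.smul (continuous_subtype_val.comp
            (α.continuous.comp (hic.subtype_mk fun y => hs y y.2)))
        convert h1 using 1
        ext1 y
        exact hA y y.2
      exact hco.continuousAt (isOpen_compl_singleton.mem_nhds hx)
  · exact Function.LeftInverse.injective (hinv α A A' h0 hA h0' hA')
  · exact Function.RightInverse.surjective (hinv α.symm A' A h0' hA' h0 hA)
  · intro x
    have hx1 := hβ x
    have hx0 : (x : EE n) ≠ 0 := by
      rw [← norm_ne_zero_iff, hx1]; exact one_ne_zero
    have h2 : (⟨‖(x : EE n)‖⁻¹ • (x : EE n), hs x hx0⟩ : Metric.sphere (0 : EE n) 1) = x := by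
      apply Subtype.ext
      simp [hx1]
    rw [hA _ hx0, h2, hx1, one_smul]

/-- gluing back a ball. Let `M` be a closed topological `n`-manifold,
`B ⊆ M` a compact locally flat `n`-ball with frontier sphere `S = ∂B`, and
`φ : S^{n-1} ≃ₜ S` a homeomorphism from the standard unit sphere of `ℝⁿ` onto `S`.
Then the quotient of `(M ∖ int B) ⊔ 𝔹ⁿ` identifying each `x ∈ ∂𝔹ⁿ` with `φ(x)` is
homeomorphic to `M`. -/
theorem glue_ball_back {n : ℕ} {M : Type*} [MetricSpace M] [CompactSpace M] [Nonempty M]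
    (hM : IsChartedEuclidean n M)
    (B : Set M) (hB : IsCompactLocallyFlatBall n B)
    (φ : (Metric.sphere (0 : EuclideanSpace ℝ (Fin n)) 1) ≃ₜ (frontier B)) :
    Nonempty
      (Quot (fun (a b : ((interior B)ᶜ : Set M) ⊕
              (Metric.closedBall (0 : EuclideanSpace ℝ (Fin n)) 1)) =>
          ∃ (x : EuclideanSpace ℝ (Fin n)) (hx : x ∈ Metric.sphere (0 : EuclideanSpace ℝ (Fin n)) 1)
            (hxb : x ∈ Metric.closedBall (0 : EuclideanSpace ℝ (Fin n)) 1)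
            (hφ : (φ ⟨x, hx⟩ : M) ∈ ((interior B)ᶜ : Set M)),
            a = Sum.inr ⟨x, hxb⟩ ∧ b = Sum.inl ⟨(φ ⟨x, hx⟩ : M), hφ⟩)
        ≃ₜ M) := by
  obtain ⟨hBc, ⟨h⟩, hfl⟩ := hB
  have hBcl : IsClosed B := hBc.isClosed
  have hfrB : frontier B ⊆ B := hBcl.frontier_subset
  have hfs : ∀ x : B, (x : M) ∈ frontier B ↔ ‖(h x : EE n)‖ = 1 := by
    intro x
    refine ⟨sphere_of_frontier B hfl h x, fun h1 => ?_⟩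
    rw [hBcl.frontier_eq]
    exact ⟨x.2, fun hx => ball_of_interior hM B h x hx h1⟩
  -- the frontier is identified with the sphere by `h`
  let η : frontier B ≃ₜ Metric.sphere (0 : EE n) 1 :=
    { toFun := fun x => ⟨h ⟨x, hfrB x.2⟩, mem_sphere_zero_iff_norm.2 ((hfs _).1 x.2)⟩
      invFun := fun y => ⟨h.symm ⟨y, Metric.sphere_subset_closedBall y.2⟩, (hfs _).2 (by
        rw [h.apply_symm_apply]; exact mem_sphere_zero_iff_norm.1 y.2)⟩
      left_inv := fun x => by simp
      right_inv := fun y => by simp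
      continuous_toFun := by fun_prop
      continuous_invFun := by fun_prop }
  obtain ⟨A, hAc, hAn, hAb, hAα⟩ := alexander (φ.trans η)
  have hAcl : ∀ y : Metric.closedBall (0 : EE n) 1, A y ∈ Metric.closedBall (0 : EE n) 1 := by
    intro y
    rw [mem_closedBall_zero_iff, hAn]
    exact mem_closedBall_zero_iff.1 y.2
  let β : Metric.closedBall (0 : EE n) 1 → B := fun y => h.symm ⟨A y, hAcl y⟩
  have hβc : Continuous β := by fun_prop
  have hβinj : Function.Injective β := by
    intro y z hyz
    have := h.symm.injective hyz
    exact Subtype.ext (hAb.1 (congrArg Subtype.val this))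
  have hβfr : ∀ y, (β y : M) ∈ frontier B ↔ ‖(y : EE n)‖ = 1 := by
    intro y
    rw [hfs]
    simp [β, hAn]
  have hβφ : ∀ (x : EE n) (hx : x ∈ Metric.sphere (0 : EE n) 1)
      (hxb : x ∈ Metric.closedBall (0 : EE n) 1), (β ⟨x, hxb⟩ : M) = φ ⟨x, hx⟩ := by
    intro x hx hxb
    have h1 := hAα ⟨x, hx⟩
    have h2 : (⟨A x, hAcl ⟨x, hxb⟩⟩ : Metric.closedBall (0 : EE n) 1) =
        h ⟨φ ⟨x, hx⟩, hfrB (φ ⟨x, hx⟩).2⟩ := Subtype.ext h1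
    simp only [β]
    rw [h2, h.symm_apply_apply]
  let f : ((interior B)ᶜ : Set M) ⊕ (Metric.closedBall (0 : EuclideanSpace ℝ (Fin n)) 1) → M :=
    Sum.elim (fun x => (x : M)) (fun y => (β y : M))
  have hf : Continuous f := continuous_subtype_val.sumElim (continuous_subtype_val.comp hβc)
  have hcross : ∀ (x : ((interior B)ᶜ : Set M)) (y : Metric.closedBall (0 : EE n) 1),
      (x : M) = β y → ∃ hy : (y : EE n) ∈ Metric.sphere (0 : EE n) 1, (x : M) = φ ⟨y, hy⟩ := by
    intro x y hxy
    have h1 : (β y : M) ∈ frontier B := by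
      rw [hBcl.frontier_eq]
      exact ⟨(β y).2, fun hm => x.2 (hxy ▸ hm)⟩
    have h2 : (y : EE n) ∈ Metric.sphere (0 : EE n) 1 :=
      mem_sphere_zero_iff_norm.2 ((hβfr y).1 h1)
    exact ⟨h2, by rw [hxy]; exact hβφ y h2 y.2⟩
  have : CompactSpace ((interior B)ᶜ : Set M) :=
    isCompact_iff_compactSpace.1 isOpen_interior.isClosed_compl.isCompact
  have : CompactSpace (Metric.closedBall (0 : EuclideanSpace ℝ (Fin n)) 1) :=
    isCompact_iff_compactSpace.1 (isCompact_closedBall _ _)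
  refine ⟨Continuous.homeoOfEquivCompactToT2 (f := Equiv.ofBijective (Quot.lift f ?_) ⟨?_, ?_⟩) ?_⟩
  · rintro _ _ ⟨x, hx, hxb, hφ, rfl, rfl⟩
    exact hβφ x hx hxb
  · rintro ⟨a⟩ ⟨b⟩ hab
    change f a = f b at hab
    rcases a with a | a <;> rcases b with b | b
    · have : a = b := Subtype.ext hab
      rw [this]
    · obtain ⟨hy, hxy⟩ := hcross a b hab
      refine (Quot.sound ⟨b, hy, b.2, hxy ▸ a.2, rfl, ?_⟩).symm
      congr 1
      exact Subtype.ext hxy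
    · obtain ⟨hy, hxy⟩ := hcross b a hab.symm
      refine Quot.sound ⟨a, hy, a.2, hxy ▸ b.2, rfl, ?_⟩
      congr 1
      exact Subtype.ext hxy
    · have : a = b := hβinj (Subtype.ext hab)
      rw [this]
  · intro m
    by_cases hm : m ∈ interior B
    · let b : B := ⟨m, interior_subset hm⟩
      obtain ⟨y, hy⟩ := hAb.2 (h b)
      have hyb : y ∈ Metric.closedBall (0 : EE n) 1 := by
        rw [mem_closedBall_zero_iff, ← hAn, hy]
        exact mem_closedBall_zero_iff.1 (h b).2
      refine ⟨Quot.mk _ (Sum.inr ⟨y, hyb⟩), ?_⟩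
      change (β ⟨y, hyb⟩ : M) = m
      have h2 : (⟨A y, hAcl ⟨y, hyb⟩⟩ : Metric.closedBall (0 : EE n) 1) = h b := Subtype.ext hy
      simp only [β]
      rw [h2, h.symm_apply_apply]
    · exact ⟨Quot.mk _ (Sum.inl ⟨m, hm⟩), rfl⟩
  · exact continuous_quot_lift _ hf
end
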